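/- For every integer n ≥ 1, every nonnegative integer p, every λ ∈ {-1, 0}, every real α with 0 ≤ α < 1/4 and every x ∈ I, the fourth moment of the generalized operator satisfies L_n^{(α)}(t⁴; x) := Σ_k w_{n,k}^{(α)}(x)·(k/n)⁴ = ((n+p)x/(n⁴(1-(λ+1)α))) · [ (n+p+2λ+1)(n+p+2(2λ+1))(n+p+3(2λ+1))·(x+α)(x+2α)(x+3α)/((1-(3λ+2)α)(1-(5λ+3)α)(1-(7λ+4)α)) + 6(n+p+2λ+1)(n+p+2(2λ+1))·(x+α)(x+2α)/((1-(3λ+2)α)(1-(5λ+3)α)) + 7(n+p+2λ+1)(x+α)/(1-(3λ+2)α) + 1 ], the sum/series being convergent. -/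

import Mathlib

/-! The two values of `λ` give the Pólya urn distribution (`λ = -1`) and the inverse Pólya urn
distribution (`λ = 0`).  Write `[a]_k = a (a + α) ⋯ (a + (k - 1) α)` and `N = n + p`.

In both cases the factorial moments are computed by index shifting: `k` times the `k`-th weight is
a constant times the `(k - 1)`-st weight of the same family with `x` replaced by `x + α`, so each
factorial moment reduces to the statement that the weights of some member of the family sum to `1`.
The fourth moment follows from `k⁴ = k^{(4)} + 6 k^{(3)} + 7 k^{(2)} + k^{(1)}` for the falling
factorials `k^{(r)}`.

* For `λ = -1` the total mass is the Vandermonde identity `∑ C(N,k) [x]_k [b]_{N-k} = [x+b]_N`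
  (`polya_total`), and the factorial moments are in `polya_moment`.
* For `λ = 0` let `a_N(k)` be the probability that `k` failures precede the `N`-th success in the
  urn started with `b` (success) and `x` (failure).  The partial sums of `a_{N+1}` and `a_N` up to
  `K` differ by the probability `d_N(K)` that exactly `K` failures occur among the first `N + K`
  draws and the next draw is a failure (`invPolya_partial`).  Partial sums are bounded by `1`, so
  `d_N(K)` converges as `K → ∞`; since `a_{N+1}(K+1)` dominates a constant times `d_N(K) / (K+1)`
  and is summable, divergence of the harmonic series forces the limit to be `0`.  Hence
  `∑ a_N = 1` by induction on `N` (`invPolya_total`).  The factorial moments (`invPolya_moment`)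
  replace `b` by `b - α` at each shift, so the `r`-th one needs `r α < 1`. -/

/-- The weights `w_{n,k}^{(α)}(x)` of the generalized positive linear operator,
for the parameter `lam`(= λ) which is `-1` or `0`.  Empty products equal `1`;
for `lam = -1` and `k > n + p` the binomial coefficient vanishes, so these
weights vanish and summing over all `k : ℕ` is the same as summing over
`0 ≤ k ≤ n + p`. -/
noncomputable def w (n p : ℕ) (lam : ℤ) (α x : ℝ) (k : ℕ) : ℝ :=
  (((n : ℝ) + p) / ((n : ℝ) + p + ((lam : ℝ) + 1) * k)) *
    (Nat.choose ((n : ℤ) + p + (lam + 1) * k).toNat k : ℝ) *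
    (∏ i ∈ Finset.range k, (x + (i : ℝ) * α)) *
    (∏ i ∈ Finset.range ((n : ℤ) + p + lam * k).toNat,
        (1 + (lam : ℝ) * x + (i : ℝ) * α)) /
    (∏ i ∈ Finset.range ((n : ℤ) + p + (lam + 1) * k).toNat,
        (1 + ((lam : ℝ) + 1) * x + (i : ℝ) * α))

/-- The interval `I`: `[0,1]` when `λ = -1` and `[0,∞)` when `λ = 0`. -/
noncomputable def Iset (lam : ℤ) : Set ℝ :=
  if lam = -1 then Set.Icc (0 : ℝ) 1 else Set.Ici (0 : ℝ)

open Filter Topology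

/-! ### Rising products -/

/-- The rising product `a (a + α) ⋯ (a + (k - 1) α)` with step `α`. -/
noncomputable def rise (α a : ℝ) (k : ℕ) : ℝ := ∏ i ∈ Finset.range k, (a + (i : ℝ) * α)

lemma rise_zero (α a : ℝ) : rise α a 0 = 1 := by simp [rise]

lemma rise_succ (α a : ℝ) (k : ℕ) : rise α a (k + 1) = rise α a k * (a + k * α) := by
  simp [rise, Finset.prod_range_succ]

lemma rise_succ' (α a : ℝ) (k : ℕ) : rise α a (k + 1) = a * rise α (a + α) k := by
  unfold rise
  rw [Finset.prod_range_succ', mul_comm]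
  congr 1
  · simp
  · refine Finset.prod_congr rfl fun i _ => ?_
    push_cast
    ring

lemma rise_nonneg {α a : ℝ} (hα : 0 ≤ α) (ha : 0 ≤ a) (k : ℕ) : 0 ≤ rise α a k :=
  Finset.prod_nonneg fun i _ => by positivity

lemma rise_pos {α a : ℝ} (hα : 0 ≤ α) (ha : 0 < a) (k : ℕ) : 0 < rise α a k :=
  Finset.prod_pos fun i _ => by positivity

/-! ### The Pólya distribution (`λ = -1`) -/

/-- The Vandermonde identity for rising products. -/
lemma polya_total (α x b : ℝ) (N : ℕ) :
    ∑ ij ∈ Finset.HasAntidiagonal.antidiagonal N, (N.choose ij.1 : ℝ) * (rise α x ij.1 * rise α b ij.2)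
      = rise α (x + b) N := by
  induction N with
  | zero => simp [rise_zero]
  | succ N ih =>
    rw [Finset.sum_antidiagonal_choose_succ_mul (fun i j => rise α x i * rise α b j),
      rise_succ, ← ih, Finset.sum_mul, ← Finset.sum_add_distrib]
    refine Finset.sum_congr rfl fun ij hij => ?_
    have h : ij.1 + ij.2 = N := Finset.HasAntidiagonal.mem_antidiagonal.mp hij
    have h2 : N.choose ij.2 = N.choose ij.1 := by
      rw [← h, Nat.choose_symm_add]
    rw [rise_succ, rise_succ, ← h]
    rw [← h] at h2
    rw [h2]
    push_cast
    ring

lemma hasSum_of_eq {f g : ℕ → ℝ} {s t : ℝ} (h : HasSum f s) (hfg : ∀ k, g k = f k)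
    (hst : t = s) : HasSum g t := by
  rw [hst, funext hfg]
  exact h

/-- A series whose `0`-th term vanishes may be shifted by one index. -/
lemma hasSum_of_shift {f : ℕ → ℝ} {s : ℝ} (h0 : f 0 = 0)
    (h : HasSum (fun k => f (k + 1)) s) : HasSum f s := by
  have := (hasSum_nat_add_iff (f := f) 1).mp h
  simpa [h0] using this

/-- Factorial moments of the Pólya distribution. -/
lemma polya_moment {α : ℝ} (hα : 0 ≤ α) (r : ℕ) : ∀ (N : ℕ) (x b : ℝ), 0 < x + b →
    HasSum (fun k : ℕ => (k.descFactorial r : ℝ) *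
      ((N.choose k : ℝ) * (rise α x k * rise α b (N - k)) / rise α (x + b) N))
      ((N.descFactorial r : ℝ) * rise α x r / rise α (x + b) r) := by
  induction r with
  | zero =>
    intro N x b h
    have hp := (rise_pos hα h N).ne'
    have hs := hasSum_sum_of_ne_finset_zero (L := .unconditional ℕ) (s := Finset.range (N + 1))
      (f := fun k : ℕ => (k.descFactorial 0 : ℝ) *
        ((N.choose k : ℝ) * (rise α x k * rise α b (N - k)) / rise α (x + b) N)) (by
        intro k hk
        have : N < k := by simpa using hk
        simp [Nat.choose_eq_zero_of_lt this])
    refine hasSum_of_eq hs (fun _ => rfl) ?_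
    have ht := polya_total α x b N
    rw [Finset.Nat.sum_antidiagonal_eq_sum_range_succ
      (fun i j => (N.choose i : ℝ) * (rise α x i * rise α b j))] at ht
    simp only [Nat.descFactorial_zero, Nat.cast_one, one_mul, rise_zero, div_one]
    rw [← Finset.sum_div, ht, div_self hp]
  | succ r ih =>
    intro N x b h
    refine hasSum_of_shift (by simp) ?_
    cases N with
    | zero => simp
    | succ N =>
      have h' : 0 < x + α + b := by linarith
      have e : x + α + b = x + b + α := by ring
      have hs := (ih N (x + α) b h').mul_left (((N : ℝ) + 1) * x / (x + b))
      rw [e] at h' hs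
      have hN := (rise_pos hα h' N).ne'
      have hr := (rise_pos hα h' r).ne'
      have hs0 := h.ne'
      refine hasSum_of_eq hs (fun k => ?_) ?_
      · have hc : ((N : ℝ) + 1) * N.choose k = (N + 1).choose (k + 1) * ((k : ℝ) + 1) := by
          exact_mod_cast Nat.add_one_mul_choose_eq N k
        rw [Nat.succ_descFactorial_succ, rise_succ', rise_succ', Nat.add_sub_add_right]
        push_cast
        field_simp
        linear_combination (-(k.descFactorial r : ℝ) * x * rise α (x + α) k * rise α b (N - k)) * hc
      · rw [Nat.succ_descFactorial_succ, rise_succ', rise_succ']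
        push_cast
        field_simp

/-! ### The inverse Pólya distribution (`λ = 0`) -/

/-- The probability that `k` failures precede the `N`-th success in the Pólya urn with initial
content `b` (success) and `x` (failure), where each draw adds `α` to the drawn colour. -/
noncomputable def invPolya (α x b : ℝ) (N k : ℕ) : ℝ :=
  (N.multichoose k : ℝ) * rise α x k * rise α b N / rise α (x + b) (N + k)

/-- The probability that the first `N + K` draws contain exactly `K` failures and the next draw
is a failure. -/
noncomputable def invPolyaTail (α x b : ℝ) (N K : ℕ) : ℝ :=
  ((N + 1).multichoose K : ℝ) * rise α x (K + 1) * rise α b N / rise α (x + b) (N + K + 1)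

lemma invPolya_nonneg {α x b : ℝ} (hα : 0 ≤ α) (hx : 0 ≤ x) (hb : 0 < b) (N k : ℕ) :
    0 ≤ invPolya α x b N k := by
  have := rise_nonneg hα hx k
  have := rise_pos hα hb N
  have := rise_pos hα (by linarith : 0 < x + b) (N + k)
  unfold invPolya
  positivity

lemma invPolyaTail_nonneg {α x b : ℝ} (hα : 0 ≤ α) (hx : 0 ≤ x) (hb : 0 < b) (N k : ℕ) :
    0 ≤ invPolyaTail α x b N k := by
  have := rise_nonneg hα hx (k + 1)
  have := rise_pos hα hb N
  have := rise_pos hα (by linarith : 0 < x + b) (N + k + 1)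
  unfold invPolyaTail
  positivity

/-- The partial sum up to `K` is the probability of at most `K` failures in the first `N + K`
draws; one more draw, with one more success required, loses exactly the tail event. -/
lemma invPolya_partial {α x b : ℝ} (hα : 0 ≤ α) (hx : 0 ≤ x) (hb : 0 < b) (N K : ℕ) :
    ∑ k ∈ Finset.range (K + 1), invPolya α x b (N + 1) k
      = ∑ k ∈ Finset.range (K + 1), invPolya α x b N k - invPolyaTail α x b N K := by
  have hs : 0 < x + b := by linarith
  induction K with
  | zero =>
    have h1 := (rise_pos hα hs N).ne'
    have h2 : x + b + N * α ≠ 0 := by positivity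
    simp only [invPolya, invPolyaTail, zero_add, Finset.range_one, Finset.sum_singleton,
      Nat.multichoose_zero_right, add_zero, rise_zero, rise_succ]
    field_simp
    push_cast
    ring
  | succ K ih =>
    rw [Finset.sum_range_succ, ih, Finset.sum_range_succ _ (K + 1)]
    have h1 := (rise_pos hα hs (N + K + 1)).ne'
    have h2 : x + b + ((N + K + 1 : ℕ) : ℝ) * α ≠ 0 := by positivity
    have e1 : N + 1 + (K + 1) = N + K + 1 + 1 := by ring
    have e2 : N + (K + 1) = N + K + 1 := by ring
    have key : invPolya α x b (N + 1) (K + 1) = invPolya α x b N (K + 1)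
        - invPolyaTail α x b N (K + 1) + invPolyaTail α x b N K := by
      simp only [invPolya, invPolyaTail, e1, e2, rise_succ α (x + b) (N + K + 1),
        rise_succ α x (K + 1), rise_succ α b N, Nat.multichoose_succ_succ]
      field_simp
      push_cast
      ring
    rw [key]
    ring

/-- The tail event at `K`, weighted by a harmonic term, is dominated by the next weight. -/
lemma invPolya_step_bound {α x b : ℝ} (hα : 0 ≤ α) (hx : 0 ≤ x) (hb : 0 < b) (N K : ℕ) :
    b / (x + b + (N + 1) * α) * (invPolyaTail α x b N K * (1 / ((K : ℝ) + 1)))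
      ≤ invPolya α x b (N + 1) (K + 1) := by
  have hs : 0 < x + b := by linarith
  have h1 := rise_pos hα hs (N + K + 1)
  have h3 := rise_nonneg hα hx (K + 1)
  have h4 := rise_pos hα hb N
  have e1 : N + 1 + (K + 1) = N + K + 1 + 1 := by ring
  have hd := invPolyaTail_nonneg hα hx hb N K
  have hq : 0 < x + b + ((N + K + 1 : ℕ) : ℝ) * α := by positivity
  have key : invPolyaTail α x b N K * ((b + N * α) / (x + b + ((N + K + 1 : ℕ) : ℝ) * α))
      ≤ invPolya α x b (N + 1) (K + 1) := by
    unfold invPolya invPolyaTail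
    rw [e1, rise_succ α (x + b) (N + K + 1), rise_succ α b N, Nat.multichoose_succ_succ,
      div_mul_div_comm]
    refine div_le_div_of_nonneg_right ?_ (by positivity)
    have : (0 : ℝ) ≤ N.multichoose (K + 1) * rise α x (K + 1) * rise α b N * (b + N * α) := by
      positivity
    push_cast
    linarith only [this]
  refine le_trans ?_ key
  have : b / (x + b + (N + 1) * α) * (1 / ((K : ℝ) + 1))
      ≤ (b + N * α) / (x + b + ((N + K + 1 : ℕ) : ℝ) * α) := by
    rw [div_mul_div_comm, mul_one]
    have : (0 : ℝ) ≤ N * α := by positivity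
    have : (0 : ℝ) ≤ K * (x + b) := by positivity
    have : (0 : ℝ) ≤ K * N * α := by positivity
    gcongr
    · linarith
    · push_cast
      linarith
  calc _ = invPolyaTail α x b N K * (b / (x + b + (N + 1) * α) * (1 / ((K : ℝ) + 1))) := by ring
    _ ≤ _ := mul_le_mul_of_nonneg_left this hd

/-- If `d k → L ≥ 0` and `d k / (k + 1)` is summable, then `L = 0`, because the harmonic series
diverges. -/
lemma limit_eq_zero_of_summable_div {d : ℕ → ℝ} {L : ℝ} (hd : Tendsto d atTop (𝓝 L))
    (hL : 0 ≤ L) (hs : Summable fun k : ℕ => d k * (1 / ((k : ℝ) + 1))) : L = 0 := by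
  by_contra hne
  have hpos : 0 < L := lt_of_le_of_ne hL (Ne.symm hne)
  have hev : ∀ᶠ k in atTop, L / 2 < d k := hd.eventually (lt_mem_nhds (by linarith))
  have h1 : Summable fun k : ℕ => L / 2 * (1 / ((k : ℝ) + 1)) := by
    refine Summable.of_norm_bounded_eventually_nat hs ?_
    filter_upwards [hev] with k hk
    rw [Real.norm_of_nonneg (by positivity)]
    gcongr
  have h2 : Summable fun k : ℕ => 1 / ((k : ℝ) + 1) :=
    (summable_mul_left_iff (by positivity)).mp h1
  refine Real.not_summable_one_div_natCast ((summable_nat_add_iff 1).mp ?_)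
  simpa using h2

lemma invPolya_total {α x b : ℝ} (hα : 0 ≤ α) (hx : 0 ≤ x) (hb : 0 < b) (N : ℕ) :
    HasSum (invPolya α x b N) 1 := by
  induction N with
  | zero =>
    refine hasSum_of_eq (hasSum_ite_eq (0 : ℕ) (1 : ℝ)) (fun k => ?_) rfl
    cases k <;> simp [invPolya, rise_zero]
  | succ N ih =>
    have hnn := invPolya_nonneg hα hx hb (N + 1)
    have hsum : Summable (invPolya α x b (N + 1)) := by
      refine summable_of_sum_range_le (c := 1) hnn fun K => ?_
      refine le_trans (Finset.sum_le_sum_of_subset_of_nonneg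
        (Finset.range_mono (Nat.le_succ K)) fun i _ _ => hnn i) ?_
      rw [Nat.succ_eq_add_one, invPolya_partial hα hx hb]
      have := invPolyaTail_nonneg hα hx hb N K
      have := sum_le_hasSum (Finset.range (K + 1))
        (fun i _ => invPolya_nonneg hα hx hb N i) ih
      linarith
    have ht1 := (tendsto_add_atTop_iff_nat 1).mpr ih.tendsto_sum_nat
    have ht2 := (tendsto_add_atTop_iff_nat 1).mpr hsum.hasSum.tendsto_sum_nat
    have hd : Tendsto (invPolyaTail α x b N) atTop
        (𝓝 (1 - ∑' k, invPolya α x b (N + 1) k)) := by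
      refine (ht1.sub ht2).congr fun K => ?_
      rw [invPolya_partial hα hx hb]
      ring
    have hL := ge_of_tendsto' hd fun K => invPolyaTail_nonneg hα hx hb N K
    have hc : b / (x + b + (N + 1) * α) ≠ 0 := by positivity
    have hsd : Summable fun k : ℕ => invPolyaTail α x b N k * (1 / ((k : ℝ) + 1)) := by
      refine (summable_mul_left_iff hc).mp ?_
      refine Summable.of_nonneg_of_le (fun K => ?_) (invPolya_step_bound hα hx hb N)
        ((summable_nat_add_iff 1).mpr hsum)
      have := invPolyaTail_nonneg hα hx hb N K
      positivity
    have h0 := limit_eq_zero_of_summable_div hd hL hsd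
    have h1 : ∑' k, invPolya α x b (N + 1) k = 1 := by linarith
    exact h1 ▸ hsum.hasSum

lemma succ_mul_multichoose (N k : ℕ) :
    (k + 1) * N.multichoose (k + 1) = N * (N + 1).multichoose k := by
  rw [Nat.multichoose_eq, Nat.multichoose_eq]
  cases N with
  | zero => simp
  | succ N =>
    have h3 := Nat.choose_succ_right_eq (N + k + 1) k
    have e1 : N + 1 + (k + 1) - 1 = N + k + 1 := by omega
    have e2 : N + 1 + 1 + k - 1 = N + k + 1 := by omega
    have e3 : N + k + 1 - k = N + 1 := by omega
    rw [e3] at h3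
    rw [e1, e2]
    linarith

/-- Factorial moments of the inverse Pólya distribution, before normalization by `rise α b N`. -/
lemma invPolya_moment {α : ℝ} (hα : 0 ≤ α) (r : ℕ) : ∀ (N : ℕ) (x b : ℝ), 0 ≤ x → r * α < b →
    HasSum (fun k : ℕ => (k.descFactorial r : ℝ) *
      ((N.multichoose k : ℝ) * rise α x k / rise α (x + b) (N + k)))
      ((N.ascFactorial r : ℝ) * rise α x r / rise α (b - r * α) (N + r)) := by
  induction r with
  | zero =>
    intro N x b hx hb
    have hb : 0 < b := by simpa using hb
    have hN := (rise_pos hα hb N).ne'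
    have := (invPolya_total hα hx hb N).mul_left (rise α b N)⁻¹
    refine hasSum_of_eq this (fun k => ?_) ?_
    · simp only [invPolya, Nat.descFactorial_zero, Nat.cast_one]
      field_simp
    · simp [rise_zero]
  | succ r ih =>
    intro N x b hx hb
    push_cast at hb
    refine hasSum_of_shift (by simp) ?_
    have hs := (ih (N + 1) (x + α) (b - α) (by linarith) (by linarith)).mul_left ((N : ℝ) * x)
    refine hasSum_of_eq hs (fun k => ?_) ?_
    · have hc : ((k : ℝ) + 1) * N.multichoose (k + 1) = N * (N + 1).multichoose k := by
        exact_mod_cast succ_mul_multichoose N k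
      have e1 : x + α + (b - α) = x + b := by ring
      have e2 : N + (k + 1) = N + 1 + k := by ring
      rw [Nat.succ_descFactorial_succ, rise_succ', e1, e2]
      push_cast
      linear_combination ((k.descFactorial r : ℝ) * x * rise α (x + α) k
        / rise α (x + b) (N + 1 + k)) * hc
    · have e1 : b - α - r * α = b - ((r + 1 : ℕ) : ℝ) * α := by push_cast; ring
      have e2 : N + (r + 1) = N + 1 + r := by ring
      have hc : (N.ascFactorial (r + 1) : ℝ) = N * (N + 1).ascFactorial r := by
        exact_mod_cast (Nat.ascFactorial_succ.trans (Nat.succ_ascFactorial N r).symm)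
      rw [e1, e2, rise_succ', hc]
      ring

/-! ### The fourth moment -/

lemma cast_descFactorial_succ (k r : ℕ) :
    (k.descFactorial (r + 1) : ℝ) = ((k : ℝ) - r) * k.descFactorial r := by
  rw [Nat.descFactorial_succ]
  rcases le_or_gt r k with h | h
  · push_cast [h]
    ring
  · simp [Nat.descFactorial_eq_zero_iff_lt.mpr h]

/-- The fourth power in terms of falling factorials. -/
lemma pow_four_eq (k : ℕ) : (k : ℝ) ^ 4 = k.descFactorial 4 + 6 * k.descFactorial 3
    + 7 * k.descFactorial 2 + k.descFactorial 1 := by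
  simp only [cast_descFactorial_succ, Nat.descFactorial_zero]
  push_cast
  ring

/-- The fourth moment assembled from the first four factorial moments. -/
lemma hasSum_pow_four {f : ℕ → ℝ} {m : ℕ → ℝ}
    (h : ∀ r ≤ 4, HasSum (fun k : ℕ => (k.descFactorial r : ℝ) * f k) (m r)) :
    HasSum (fun k : ℕ => f k * (k : ℝ) ^ 4) (m 4 + 6 * m 3 + 7 * m 2 + m 1) := by
  refine hasSum_of_eq ((((h 4 (by norm_num)).add ((h 3 (by norm_num)).mul_left 6)).add
    ((h 2 (by norm_num)).mul_left 7)).add (h 1 (by norm_num))) (fun k => ?_) rfl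
  rw [pow_four_eq]
  ring

lemma w_neg_one (n p : ℕ) (hn : 1 ≤ n) (α x : ℝ) (k : ℕ) :
    w n p (-1) α x k = ((n + p).choose k : ℝ) * (rise α x k * rise α (1 - x) (n + p - k))
      / rise α (x + (1 - x)) (n + p) := by
  have h0 : (n : ℝ) + p ≠ 0 := by positivity
  have e1 : ((n : ℤ) + p + (-1 + 1) * k).toNat = n + p := by omega
  have e2 : ((n : ℤ) + p + -1 * k).toNat = n + p - k := by omega
  have e3 : (1 : ℝ) + -1 * x = 1 - x := by ring
  unfold w rise
  rw [e1, e2]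
  push_cast
  rw [e3]
  simp [h0, mul_assoc]

lemma w_zero (n p : ℕ) (hn : 1 ≤ n) (α x : ℝ) (k : ℕ) :
    w n p 0 α x k = rise α 1 (n + p) *
      (((n + p).multichoose k : ℝ) * rise α x k / rise α (x + 1) (n + p + k)) := by
  have e1 : ((n : ℤ) + p + (0 + 1) * k).toNat = n + p + k := by omega
  have e2 : ((n : ℤ) + p + 0 * k).toNat = n + p := by omega
  have hc : ((n : ℝ) + p) / ((n : ℝ) + p + k) * ((n + p + k).choose k : ℝ)
      = (n + p).multichoose k := by
    obtain ⟨m, hm⟩ : ∃ m, n + p = m + 1 := ⟨n + p - 1, by omega⟩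
    have hm' : (n : ℝ) + p = m + 1 := by exact_mod_cast hm
    have h2 := Nat.choose_mul_succ_eq (m + k) k
    have e3 : m + k + 1 - k = m + 1 := by omega
    have e4 : m + 1 + k - 1 = m + k := by omega
    have e5 : m + 1 + k = m + k + 1 := by ring
    rw [e3] at h2
    rw [hm', hm, Nat.multichoose_eq, e4, e5]
    have h3 : ((m + k).choose k : ℝ) * (m + k + 1) = (m + k + 1).choose k * (m + 1) := by
      exact_mod_cast h2
    have h4 : (m : ℝ) + 1 + k ≠ 0 := by positivity
    field_simp
    linear_combination -h3
  unfold w rise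
  rw [e1, e2, ← hc]
  push_cast
  simp only [zero_add, one_mul, zero_mul, add_zero, add_comm x 1]
  ring

/-- the fourth moment of the generalized operator, for `0 ≤ α < 1/4`,
the sum/series being convergent. -/
theorem fourth_moment (n p : ℕ) (hn : 1 ≤ n) (lam : ℤ) (hlam : lam = -1 ∨ lam = 0)
    (α : ℝ) (hα : 0 ≤ α) (hα4 : α < 1/4) (x : ℝ) (hx : x ∈ Iset lam) :
    HasSum (fun k : ℕ => w n p lam α x k * ((k : ℝ) / n) ^ 4)
      (((n : ℝ) + p) * x / ((n : ℝ) ^ 4 * (1 - ((lam : ℝ) + 1) * α)) *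
        (((n : ℝ) + p + 2 * (lam : ℝ) + 1) * ((n : ℝ) + p + 2 * (2 * (lam : ℝ) + 1)) *
            ((n : ℝ) + p + 3 * (2 * (lam : ℝ) + 1)) * (x + α) * (x + 2 * α) * (x + 3 * α) /
            ((1 - (3 * (lam : ℝ) + 2) * α) * (1 - (5 * (lam : ℝ) + 3) * α) *
              (1 - (7 * (lam : ℝ) + 4) * α)) +
          6 * ((n : ℝ) + p + 2 * (lam : ℝ) + 1) * ((n : ℝ) + p + 2 * (2 * (lam : ℝ) + 1)) *
            (x + α) * (x + 2 * α) /
            ((1 - (3 * (lam : ℝ) + 2) * α) * (1 - (5 * (lam : ℝ) + 3) * α)) +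
          7 * ((n : ℝ) + p + 2 * (lam : ℝ) + 1) * (x + α) / (1 - (3 * (lam : ℝ) + 2) * α) +
          1)) := by
  have hn0 : (n : ℝ) ≠ 0 := by positivity
  rcases hlam with rfl | rfl
  · have hsum := hasSum_pow_four (f := w n p (-1) α x) fun r _ => by
      simp only [w_neg_one n p hn α x]
      exact polya_moment hα r (n + p) x (1 - x) (by norm_num)
    have h1 : 1 + α ≠ 0 := by positivity
    have h2 : 1 + 2 * α ≠ 0 := by positivity
    have h3 : 1 + 3 * α ≠ 0 := by positivity
    refine hasSum_of_eq (hsum.mul_right ((1 : ℝ) / n ^ 4)) (fun k => by ring) ?_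
    have d0 : (1 : ℝ) - (((-1 : ℤ) : ℝ) + 1) * α = 1 := by push_cast; ring
    have d1 : (1 : ℝ) - (3 * ((-1 : ℤ) : ℝ) + 2) * α = 1 + α := by push_cast; ring
    have d2 : (1 : ℝ) - (5 * ((-1 : ℤ) : ℝ) + 3) * α = 1 + 2 * α := by push_cast; ring
    have d3 : (1 : ℝ) - (7 * ((-1 : ℤ) : ℝ) + 4) * α = 1 + 3 * α := by push_cast; ring
    rw [d0, d1, d2, d3]
    simp only [cast_descFactorial_succ, Nat.descFactorial_zero, rise_succ, rise_zero,
      add_sub_cancel]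
    push_cast
    simp only [zero_mul, add_zero, one_mul, sub_zero, mul_one]
    field_simp
    ring
  · have hx0 : 0 ≤ x := by simpa [Iset] using hx
    have hsum := hasSum_pow_four (f := w n p 0 α x)
      (m := fun r => rise α 1 (n + p) * (((n + p).ascFactorial r : ℝ) * rise α x r
        / rise α (1 - r * α) (n + p + r))) fun r hr => by
      have hr' : (r : ℝ) ≤ 4 := by exact_mod_cast hr
      refine hasSum_of_eq ((invPolya_moment hα r (n + p) x 1 hx0
        (by nlinarith)).mul_left (rise α 1 (n + p))) (fun k => ?_) rfl
      rw [w_zero n p hn α x]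
      ring
    refine hasSum_of_eq (hsum.mul_right ((1 : ℝ) / n ^ 4)) (fun k => by ring) ?_
    have h1 : 1 - α ≠ 0 := by linarith
    have h2 : 1 - 2 * α ≠ 0 := by linarith
    have h3 : 1 - 3 * α ≠ 0 := by linarith
    have h4 : 1 - 4 * α ≠ 0 := by linarith
    have hR := (rise_pos hα one_pos (n + p)).ne'
    have q (c : ℝ) (j : ℕ) : rise α (1 - (c + 1) * α) (j + 1)
        = (1 - (c + 1) * α) * rise α (1 - c * α) j := by
      rw [rise_succ']
      congr 2
      ring
    have q1 : rise α (1 - 1 * α) (n + p + 1) = (1 - α) * rise α 1 (n + p) := by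
      simpa using q 0 (n + p)
    have q2 : rise α (1 - 2 * α) (n + p + 2) = (1 - 2 * α) * ((1 - α) * rise α 1 (n + p)) := by
      rw [← q1]
      convert q 1 (n + p + 1) using 2 <;> norm_num
    have q3 : rise α (1 - 3 * α) (n + p + 3)
        = (1 - 3 * α) * ((1 - 2 * α) * ((1 - α) * rise α 1 (n + p))) := by
      rw [← q2]
      convert q 2 (n + p + 2) using 2 <;> norm_num
    have q4 : rise α (1 - 4 * α) (n + p + 4)
        = (1 - 4 * α) * ((1 - 3 * α) * ((1 - 2 * α) * ((1 - α) * rise α 1 (n + p)))) := by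
      rw [← q3]
      convert q 3 (n + p + 3) using 2 <;> norm_num
    push_cast
    rw [q1, q2, q3, q4]
    simp only [Nat.ascFactorial_succ, Nat.ascFactorial_zero, rise_succ, rise_zero]
    push_cast
    simp only [mul_zero, zero_add, zero_mul, add_zero, one_mul, mul_one]
    field_simp
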